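/- Let c ∈ ℝ, let e be a positive integer, and let f, p, q ∈ ℝ[X] be polynomials with q(c) ≠ 0 and p ≡ f·q (mod (X−c)^e). Then, in the polynomial ring ℝ[X,Y], the ideal generated by (X−c)^e and q(X)·Y − p(X) is equal to the ideal generated by (X−c)^e and Y − f(X). -/

import Mathlib

/-!
Write `m = (X - c)^e`. Since `q(c) ≠ 0`, the polynomial `q` is a unit modulo `m`, and the congruence
gives `q Y - p ≡ q (Y - f)` modulo `m`. So modulo `m` the second generators of the two ideals
differ by a unit.
-/

open Polynomial

noncomputable section

/-- The embedding of `ℝ[X]` into `ℝ[X,Y] = MvPolynomial (Fin 2) ℝ` sending `X` to the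
first variable. -/
def toXY : ℝ[X] →ₐ[ℝ] MvPolynomial (Fin 2) ℝ :=
  Polynomial.aeval (MvPolynomial.X 0)

/-- If `q(c) ≠ 0` and `p ≡ f·q (mod (X−c)^e)` with `e ≥ 1`, then in
`ℝ[X,Y]` the ideal `((X−c)^e, q(X)·Y − p(X))` equals the ideal `((X−c)^e, Y − f(X))`. -/
theorem ideal_eq_of_jet_congruence (c : ℝ) (e : ℕ) (he : 0 < e) (f p q : ℝ[X])
    (hq : q.eval c ≠ 0) (hpq : (X - C c) ^ e ∣ p - f * q) :
    Ideal.span {toXY ((X - C c) ^ e), toXY q * MvPolynomial.X 1 - toXY p} =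
      Ideal.span {toXY ((X - C c) ^ e), MvPolynomial.X 1 - toXY f} := by
  obtain ⟨r, hr⟩ := hpq
  have hcop : IsCoprime q ((X - C c) ^ e) := by
    refine IsCoprime.pow_right (IsCoprime.symm ?_)
    exact (irreducible_X_sub_C c).coprime_iff_not_dvd.mpr fun h => hq (dvd_iff_isRoot.mp h)
  obtain ⟨a, b, hab⟩ := hcop
  generalize (X - C c) ^ e = m at *
  have hr' := congrArg toXY hr
  have hab' := congrArg toXY hab
  simp only [map_sub, map_mul, map_add, map_one] at hr' hab'
  apply le_antisymm <;> rw [Ideal.span_le, Set.insert_subset_iff, Set.singleton_subset_iff]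
  · refine ⟨Ideal.subset_span (by simp), Ideal.mem_span_pair.mpr ⟨-toXY r, toXY q, ?_⟩⟩
    linear_combination hr'
  -- Multiply `Y - f` by `1 = a q + b m` and replace `q (Y - f)` by `(q Y - p) + m r`.
  · refine ⟨Ideal.subset_span (by simp), Ideal.mem_span_pair.mpr
      ⟨toXY a * toXY r + toXY b * (MvPolynomial.X 1 - toXY f), toXY a, ?_⟩⟩
    linear_combination (MvPolynomial.X 1 - toXY f) * hab' - toXY a * hr'
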